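/- Let f0 = sup_{k≥0} 2^{k−2^k} χ_{[0,2^{2^k})} and a(t,f0) = (1/log(1+t)) ∫_0^t f0(s) ds. Then lim_{n→∞} a(2^{2^n}, f0) = 2/log 2; consequently limsup_{t→∞} a(t,f0) ≥ 2/log 2. -/

import Mathlib

open MeasureTheory Filter Set

/-- `f0 = sup_{k ≥ 0} 2^(k - 2^k) χ_[0, 2^(2^k))`. -/
noncomputable def f0 : ℝ → ℝ := fun t =>
  ⨆ k : ℕ, if t < (2:ℝ) ^ (2 ^ k) then (2:ℝ) ^ ((k : ℤ) - 2 ^ k) else 0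

/-- `a(t, f0) = (1/log(1+t)) ∫_0^t f0(s) ds`. -/
noncomputable def aF : ℝ → ℝ := fun t => (∫ s in (0:ℝ)..t, f0 s) / Real.log (1 + t)

/-!
Between consecutive jumps `2 ^ 2 ^ k` and `2 ^ 2 ^ (k + 1)` the function `f0` is constant, and it
contributes `2 ^ (k + 1) - 2 ^ (k + 1) / 2 ^ 2 ^ k` to the integral. The main terms add up to a
geometric series and the corrections are summable, so the integral of `f0` up to `2 ^ 2 ^ n` is
`2 ^ (n + 1) + O(1)`, whereas `log (1 + 2 ^ 2 ^ n) ~ 2 ^ n * log 2`. The value `2 / log 2` is thus a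
cluster point of `aF`, and it bounds the limsup from below because `aF` is bounded: between two
consecutive jumps both the integral and the logarithm change by a bounded factor.
-/

open Asymptotics

section StepSup

/-- The supremum of the step functions `c k • χ_(-∞, b k)`. For monotone `b` and nonnegative
antitone `c` it is the step function equal to `c (n + 1)` on `[b n, b (n + 1))`. The indicators are
not cut off on the left, so that the function is antitone on the whole line. -/
noncomputable def stepSup (b c : ℕ → ℝ) (t : ℝ) : ℝ :=
  ⨆ k : ℕ, if t < b k then c k else 0

variable {b c : ℕ → ℝ}

lemma stepSup_nonneg (hc₀ : ∀ k, 0 ≤ c k) (t : ℝ) : 0 ≤ stepSup b c t :=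
  Real.iSup_nonneg fun k => ite_nonneg (hc₀ k) le_rfl

lemma bddAbove_range_ite_lt (hc : Antitone c) (hc₀ : ∀ k, 0 ≤ c k) (t : ℝ) :
    BddAbove (range fun k => if t < b k then c k else 0) := by
  refine ⟨c 0, forall_mem_range.2 fun k => ?_⟩
  split_ifs
  exacts [hc k.zero_le, hc₀ 0]

lemma antitone_stepSup (hc : Antitone c) (hc₀ : ∀ k, 0 ≤ c k) : Antitone (stepSup b c) := by
  intro s t hst
  refine ciSup_mono (bddAbove_range_ite_lt hc hc₀ s) fun k => ?_
  by_cases ht : t < b k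
  · rw [if_pos ht, if_pos (hst.trans_lt ht)]
  · rw [if_neg ht]
    exact ite_nonneg (hc₀ k) le_rfl

lemma stepSup_eq_of_lt_of_forall_le (hc : Antitone c) (hc₀ : ∀ k, 0 ≤ c k) {n : ℕ} {t : ℝ}
    (htn : t < b n) (hlt : ∀ k < n, b k ≤ t) : stepSup b c t = c n := by
  apply le_antisymm
  · refine ciSup_le fun k => ?_
    split_ifs with htk
    · exact hc (not_lt.1 fun hkn => (hlt k hkn).not_gt htk)
    · exact hc₀ n
  · exact (if_pos htn).ge.trans (le_ciSup (bddAbove_range_ite_lt hc hc₀ t) n)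

lemma integral_stepSup_of_le (hc : Antitone c) (hc₀ : ∀ k, 0 ≤ c k) {a : ℝ} (ha : a ≤ b 0) :
    ∫ s in a..b 0, stepSup b c s = (b 0 - a) * c 0 := by
  have hconst : EqOn (stepSup b c) (fun _ => c 0) (Ioo a (b 0)) := fun s hs =>
    stepSup_eq_of_lt_of_forall_le hc hc₀ hs.2 fun k hk => absurd hk k.not_lt_zero
  rw [intervalIntegral.integral_congr_Ioo_of_le ha hconst, intervalIntegral.integral_const,
    smul_eq_mul]

lemma integral_stepSup_succ (hb : Monotone b) (hc : Antitone c) (hc₀ : ∀ k, 0 ≤ c k) (n : ℕ) :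
    ∫ s in b n..b (n + 1), stepSup b c s = (b (n + 1) - b n) * c (n + 1) := by
  have hconst : EqOn (stepSup b c) (fun _ => c (n + 1)) (Ioo (b n) (b (n + 1))) := fun s hs =>
    stepSup_eq_of_lt_of_forall_le hc hc₀ hs.2 fun k hk => (hb (Nat.lt_succ_iff.1 hk)).trans hs.1.le
  rw [intervalIntegral.integral_congr_Ioo_of_le (hb n.le_succ) hconst,
    intervalIntegral.integral_const, smul_eq_mul]

lemma integral_stepSup (hb : Monotone b) (hc : Antitone c) (hc₀ : ∀ k, 0 ≤ c k) {a : ℝ}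
    (ha : a ≤ b 0) (n : ℕ) :
    ∫ s in a..b n, stepSup b c s =
      (b 0 - a) * c 0 + ∑ k ∈ Finset.range n, (b (k + 1) - b k) * c (k + 1) := by
  have hint (x y : ℝ) : IntervalIntegrable (stepSup b c) volume x y :=
    (antitone_stepSup hc hc₀).intervalIntegrable
  rw [← intervalIntegral.integral_add_adjacent_intervals (hint a (b 0)) (hint _ _),
    integral_stepSup_of_le hc hc₀ ha,
    ← intervalIntegral.sum_integral_adjacent_intervals fun k _ => hint (b k) (b (k + 1)),
    Finset.sum_congr rfl fun k _ => integral_stepSup_succ hb hc hc₀ k]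

end StepSup

lemma monotone_two_pow_two_pow : Monotone fun k : ℕ => (2 : ℝ) ^ 2 ^ k :=
  (pow_right_mono₀ one_le_two).comp (pow_right_mono₀ one_le_two)

lemma tendsto_two_pow_two_pow_atTop : Tendsto (fun k : ℕ => (2 : ℝ) ^ 2 ^ k) atTop atTop :=
  (tendsto_pow_atTop_atTop_of_one_lt one_lt_two).comp
    (tendsto_pow_atTop_atTop_of_one_lt one_lt_two)

lemma two_pow_two_pow_succ (k : ℕ) : (2 : ℝ) ^ 2 ^ (k + 1) = 2 ^ 2 ^ k * 2 ^ 2 ^ k := by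
  rw [pow_succ 2 k, mul_two, pow_add]

lemma log_two_pow_two_pow (k : ℕ) : Real.log ((2 : ℝ) ^ 2 ^ k) = 2 ^ k * Real.log 2 := by
  rw [Real.log_pow, Nat.cast_pow, Nat.cast_ofNat]

lemma exists_two_pow_two_pow_near {t : ℝ} (ht : 2 ≤ t) :
    ∃ n : ℕ, (2 : ℝ) ^ 2 ^ n ≤ t ∧ t < 2 ^ 2 ^ (n + 1) := by
  obtain ⟨m, hmt, htm⟩ := exists_nat_pow_near (one_le_two.trans ht) one_lt_two
  have hm : 1 ≤ m := by
    by_contra! hm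
    simp only [Nat.lt_one_iff.1 hm, zero_add, pow_one] at htm
    exact htm.not_ge ht
  obtain ⟨n, hnm, hmn⟩ := exists_nat_pow_near hm one_lt_two
  exact ⟨n, (pow_right_mono₀ one_le_two hnm).trans hmt,
    htm.trans_le (pow_right_mono₀ one_le_two hmn)⟩

lemma two_zpow_sub_two_pow (k : ℕ) : (2 : ℝ) ^ ((k : ℤ) - 2 ^ k) = 2 ^ k / 2 ^ 2 ^ k := by
  rw [zpow_sub₀ two_ne_zero, zpow_natCast]
  norm_cast

lemma antitone_two_pow_div_two_pow_two_pow :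
    Antitone fun k : ℕ => (2 : ℝ) ^ k / 2 ^ 2 ^ k := by
  simp only [← two_zpow_sub_two_pow]
  refine (zpow_right_mono₀ one_le_two).comp_antitone (antitone_nat_of_succ_le fun k => ?_)
  have hk : (1 : ℤ) ≤ 2 ^ k := one_le_pow₀ one_le_two
  push_cast
  linarith [pow_succ (2 : ℤ) k]

lemma two_mul_le_two_pow : ∀ k : ℕ, 2 * k ≤ 2 ^ k
  | 0 => Nat.zero_le _
  | k + 1 => by
    have hk : k + 1 ≤ 2 ^ k := Nat.lt_two_pow_self
    rw [pow_succ, mul_comm]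
    gcongr

lemma sum_two_pow_succ_div_two_pow_two_pow_le (n : ℕ) :
    ∑ k ∈ Finset.range n, (2 : ℝ) ^ (k + 1) / 2 ^ 2 ^ k ≤ 4 := by
  have hterm (k : ℕ) : (2 : ℝ) ^ (k + 1) / 2 ^ 2 ^ k ≤ 2 * (1 / 2) ^ k := by
    have hpow : (2 : ℝ) ^ (2 * k) ≤ 2 ^ 2 ^ k :=
      pow_right_mono₀ one_le_two (two_mul_le_two_pow k)
    calc (2 : ℝ) ^ (k + 1) / 2 ^ 2 ^ k ≤ 2 ^ (k + 1) / 2 ^ (2 * k) := by gcongr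
      _ = 2 * (1 / 2) ^ k := by rw [two_mul k, pow_add, one_div_pow]; field_simp; ring
  calc ∑ k ∈ Finset.range n, (2 : ℝ) ^ (k + 1) / 2 ^ 2 ^ k
      ≤ ∑ k ∈ Finset.range n, 2 * (1 / 2 : ℝ) ^ k := Finset.sum_le_sum fun k _ => hterm k
    _ = 2 * ∑ k ∈ Finset.range n, (1 / 2 : ℝ) ^ k := (Finset.mul_sum ..).symm
    _ ≤ 4 := by linarith [sum_geometric_two_le n]

lemma isEquivalent_log_one_add : (fun x : ℝ => Real.log (1 + x)) ~[atTop] Real.log := by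
  have hdiff : Tendsto (fun x : ℝ => Real.log (1 + x) - Real.log x) atTop (nhds 0) := by
    simpa only [add_comm] using Real.tendsto_log_comp_add_sub_log 1
  exact (hdiff.isBigO_one ℝ).trans_isLittleO Real.isLittleO_const_log_atTop

lemma f0_eq_stepSup : f0 = stepSup (fun k => 2 ^ 2 ^ k) fun k => 2 ^ k / 2 ^ 2 ^ k := by
  funext t
  simp only [f0, stepSup, two_zpow_sub_two_pow]

lemma f0_nonneg (t : ℝ) : 0 ≤ f0 t := by
  rw [f0_eq_stepSup]
  exact stepSup_nonneg (fun k => by positivity) t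

lemma antitone_f0 : Antitone f0 := by
  rw [f0_eq_stepSup]
  exact antitone_stepSup antitone_two_pow_div_two_pow_two_pow fun k => by positivity

lemma integral_f0_two_pow_two_pow (n : ℕ) :
    ∫ s in (0 : ℝ)..2 ^ 2 ^ n, f0 s =
      2 ^ (n + 1) - 1 - ∑ k ∈ Finset.range n, (2 : ℝ) ^ (k + 1) / 2 ^ 2 ^ k := by
  have hstep (k : ℕ) : ((2 : ℝ) ^ 2 ^ (k + 1) - 2 ^ 2 ^ k) * (2 ^ (k + 1) / 2 ^ 2 ^ (k + 1)) =
      2 * 2 ^ k - 2 ^ (k + 1) / 2 ^ 2 ^ k := by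
    rw [two_pow_two_pow_succ]
    field_simp
    ring
  rw [f0_eq_stepSup, integral_stepSup monotone_two_pow_two_pow
    antitone_two_pow_div_two_pow_two_pow (fun k => by positivity) (by positivity) n]
  simp only [hstep, Finset.sum_sub_distrib, ← Finset.mul_sum, geom_sum_eq (OfNat.ofNat_ne_one 2)]
  ring

lemma integral_f0_two_pow_two_pow_le (n : ℕ) :
    ∫ s in (0 : ℝ)..2 ^ 2 ^ n, f0 s ≤ 2 ^ (n + 1) := by
  have hsum : 0 ≤ ∑ k ∈ Finset.range n, (2 : ℝ) ^ (k + 1) / 2 ^ 2 ^ k := by positivity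
  rw [integral_f0_two_pow_two_pow]
  linarith

lemma isBigO_integral_f0_sub_two_pow :
    (fun n : ℕ => (∫ s in (0 : ℝ)..2 ^ 2 ^ n, f0 s) - 2 ^ (n + 1)) =O[atTop]
      fun _ => (1 : ℝ) := by
  refine .of_bound 5 (.of_forall fun n => ?_)
  rw [norm_one, mul_one, Real.norm_eq_abs, abs_le]
  have hsum := sum_two_pow_succ_div_two_pow_two_pow_le n
  have hle := integral_f0_two_pow_two_pow_le n
  constructor <;> linarith [integral_f0_two_pow_two_pow n]

lemma isEquivalent_integral_f0 :
    (fun n : ℕ => ∫ s in (0 : ℝ)..2 ^ 2 ^ n, f0 s) ~[atTop] fun n => 2 ^ (n + 1) := by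
  refine isBigO_integral_f0_sub_two_pow.trans_isLittleO
    ((isLittleO_const_left_of_ne one_ne_zero).2 ?_)
  exact tendsto_norm_atTop_atTop.comp
    ((tendsto_pow_atTop_atTop_of_one_lt one_lt_two).comp (tendsto_add_atTop_nat 1))

lemma tendsto_aF_two_pow_two_pow :
    Tendsto (fun n : ℕ => aF ((2 : ℝ) ^ 2 ^ n)) atTop (nhds (2 / Real.log 2)) := by
  have hlog : (fun n : ℕ => Real.log (1 + (2 : ℝ) ^ 2 ^ n)) ~[atTop]
      fun n => 2 ^ n * Real.log 2 := by
    simpa only [Function.comp_def, log_two_pow_two_pow] using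
      isEquivalent_log_one_add.comp_tendsto tendsto_two_pow_two_pow_atTop
  refine ((isEquivalent_integral_f0.div hlog).congr_right (.of_forall fun n => ?_)).tendsto_const
  simp only [Pi.div_apply, Function.const_apply]
  rw [pow_succ, mul_div_mul_left _ _ (by positivity)]

lemma aF_le {t : ℝ} (ht : 2 ≤ t) : aF t ≤ 4 / Real.log 2 := by
  obtain ⟨n, hnt, htn⟩ := exists_two_pow_two_pow_near ht
  have hintegral : ∫ s in (0 : ℝ)..t, f0 s ≤ 2 ^ (n + 2) :=
    (intervalIntegral.integral_mono_interval le_rfl (by linarith) htn.le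
      (.of_forall f0_nonneg) antitone_f0.intervalIntegrable).trans
      (integral_f0_two_pow_two_pow_le (n + 1))
  have hlog : 2 ^ n * Real.log 2 ≤ Real.log (1 + t) := by
    rw [← log_two_pow_two_pow]
    exact Real.log_le_log (by positivity) (by linarith)
  calc aF t ≤ 2 ^ (n + 2) / (2 ^ n * Real.log 2) := by unfold aF; gcongr
    _ = 4 / Real.log 2 := by rw [pow_add]; field_simp; norm_num

lemma isBoundedUnder_aF : IsBoundedUnder (· ≤ ·) atTop aF :=
  isBoundedUnder_of_eventually_le ((eventually_ge_atTop 2).mono fun _ => aF_le)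

/-- `a(2^(2^n), f0) → 2/log 2`; consequently `limsup_{t→∞} a(t, f0) ≥ 2/log 2`. -/
theorem avA_f0_along_subsequence :
    Filter.Tendsto (fun n : ℕ => aF ((2:ℝ) ^ (2 ^ n))) Filter.atTop
      (nhds (2 / Real.log 2)) ∧
    2 / Real.log 2 ≤ Filter.limsup aF Filter.atTop := by
  refine ⟨tendsto_aF_two_pow_two_pow, ?_⟩
  have hcluster : MapClusterPt (2 / Real.log 2) atTop aF :=
    .of_comp tendsto_two_pow_two_pow_atTop tendsto_aF_two_pow_two_pow.mapClusterPt
  exact hcluster.le_limsup isBoundedUnder_aF
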